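/- Let A be a 2m×2m invertible antisymmetric matrix over a field (or over ℝ), and let L ⊆ {1,…,2m} be a subset of even cardinality. Let Â_L be the submatrix of A obtained by deleting the rows and columns indexed by L, and let A_L^{-1} be the submatrix of A^{-1} consisting of the rows and columns indexed by L. Then (−1)^{S(L)} · Pf(Â_L) = Pf(A) · Pf(A_L^{-1}), where S(L) = Σ_{ℓ∈L} ℓ, with the convention Pf of the empty matrix equals 1. -/

import Mathlib

/-- The Pfaffian of a `2n × 2n` real matrix, defined by the sum-over-permutations
formula `Pf(A) = (1/(2^n n!)) ∑_σ sgn(σ) ∏_i A(σ(2i), σ(2i+1))`. -/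
noncomputable def pfaffian {n : ℕ} (A : Matrix (Fin (2 * n)) (Fin (2 * n)) ℝ) : ℝ :=
  (1 / ((2 : ℝ) ^ n * n.factorial)) *
    ∑ σ : Equiv.Perm (Fin (2 * n)), (Equiv.Perm.sign σ : ℝ) *
      ∏ i : Fin n, A (σ ⟨2 * i.val, by have := i.isLt; omega⟩)
        (σ ⟨2 * i.val + 1, by have := i.isLt; omega⟩)

/-!
Write `E` for the columns of the identity matrix indexed by `L`. By a Schur complement,
`A ⊕ Eᵀ A⁻¹ E` is congruent, through a matrix of determinant one, to `[[0, -Eᵀ], [E, A]]`. The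
block `E` lets one clear the rows and columns of `A` indexed by `L`, again by a congruence of
determinant one, leaving the direct sum of a standard symplectic matrix and `Â_L`. The Pfaffian is
multiplicative on direct sums, and `Eᵀ A⁻¹ E` is the submatrix `A_L⁻¹`; the sign comes from the
permutation listing `L` before its complement.

Working with an arbitrary pairing `e : κ × Fin 2 ≃ ι` of the index type instead of
`{2i, 2i + 1} ⊆ {0, …, 2n - 1}` makes direct sums and re-indexings available without sign
bookkeeping until the very last step.
-/

open Equiv Finset Matrix
open scoped Nat

section Polarized

variable {κ μ ι ι' R : Type*} [Fintype κ] [Fintype μ] [Fintype ι] [DecidableEq ι]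
  [Fintype ι'] [DecidableEq ι'] [CommRing R]

/-- The polarization of the Pfaffian, without the factor `1 / (2 ^ n * n!)`: the sum defining the
Pfaffian, with the `i`-th factor of each product taken from its own matrix `A i`. The bijection `e`
fixes the reference partition of the indices into ordered pairs `(e (i, 0), e (i, 1))`. -/
def polarizedPfaffian (e : κ × Fin 2 ≃ ι) (A : κ → Matrix ι ι R) : R :=
  ∑ σ : Perm ι, Perm.sign σ • ∏ i, A i (σ (e (i, 0))) (σ (e (i, 1)))

theorem polarizedPfaffian_trans (e : κ × Fin 2 ≃ ι) (r : ι ≃ ι') (A : κ → Matrix ι' ι' R) :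
    polarizedPfaffian (e.trans r) A = polarizedPfaffian e fun i => (A i).submatrix r r :=
  Fintype.sum_equiv r.symm.permCongr _ _ fun σ => by simp [permCongr_apply]

theorem polarizedPfaffian_trans_perm (e : κ × Fin 2 ≃ ι) (π : Perm ι) (A : κ → Matrix ι ι R) :
    polarizedPfaffian (e.trans π) A = Perm.sign π • polarizedPfaffian e A := by
  rw [polarizedPfaffian, polarizedPfaffian, smul_sum]
  refine Fintype.sum_equiv (Equiv.mulRight π) _ _ fun σ => ?_
  simp [smul_smul, mul_left_comm (Perm.sign π)]

theorem polarizedPfaffian_prodCongr_trans (τ : κ ≃ μ) (e : μ × Fin 2 ≃ ι)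
    (A : μ → Matrix ι ι R) :
    polarizedPfaffian ((τ.prodCongr (.refl _)).trans e) (fun i => A (τ i)) =
      polarizedPfaffian e A :=
  sum_congr rfl fun σ _ =>
    congrArg _ (τ.prod_comp fun i => A i (σ (e (i, 0))) (σ (e (i, 1))))

theorem sign_prodCongr_refl_fin_two [DecidableEq κ] (τ : Perm κ) :
    Perm.sign (τ.prodCongr (.refl (Fin 2))) = 1 := by
  have : τ.prodCongr (.refl (Fin 2)) = prodCongrLeft fun _ => τ := by
    ext x <;> rfl
  rw [this, Perm.sign_prodCongrLeft]
  simp [Int.units_sq]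

theorem polarizedPfaffian_comp_perm (e : κ × Fin 2 ≃ ι) (A : κ → Matrix ι ι R) (τ : Perm κ) :
    polarizedPfaffian e (fun i => A (τ i)) = polarizedPfaffian e A := by
  classical
  have hπ : (τ.prodCongr (.refl (Fin 2))).trans e =
      e.trans (e.permCongr (τ.prodCongr (.refl (Fin 2)))) := by
    ext x
    simp [permCongr_apply]
  rw [← polarizedPfaffian_prodCongr_trans τ e A, hπ, polarizedPfaffian_trans_perm,
    Perm.sign_permCongr, sign_prodCongr_refl_fin_two, one_smul]

theorem polarizedPfaffian_add [DecidableEq κ] (e : κ × Fin 2 ≃ ι) (A B : κ → Matrix ι ι R) :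
    polarizedPfaffian e (fun i => A i + B i) =
      ∑ S : Finset κ, polarizedPfaffian e (S.piecewise A B) := by
  simp only [polarizedPfaffian]
  rw [sum_comm]
  refine sum_congr rfl fun σ _ => ?_
  rw [← smul_sum]
  simp only [Matrix.add_apply, prod_add, powerset_univ]
  congr 1
  refine sum_congr rfl fun S _ => ?_
  rw [← prod_mul_prod_compl S]
  congr 1
  · exact prod_congr rfl fun i hi => by simp [hi]
  · exact prod_congr (compl_eq_univ_sdiff S).symm fun i hi => by simp_all

/- Expanding all entries of `B * A i * Bᵀ` turns the alternating sum over permutations into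
determinants of column selections of `B`, which are multiplicative in `B`. -/
theorem polarizedPfaffian_congruence_eq_sum (e : κ × Fin 2 ≃ ι) (A : κ → Matrix ι ι R)
    (B : Matrix ι ι R) :
    polarizedPfaffian e (fun i => B * A i * Bᵀ) =
      ∑ h : ι → ι, (∏ i, A i (h (e (i, 0))) (h (e (i, 1)))) * (B.submatrix id h).det := by
  classical
  let E : (ι → ι) ≃ (κ → Fin 2 → ι) := (e.symm.arrowCongr (.refl ι)).trans (curry κ (Fin 2) ι)
  have entry (i : κ) (x y : ι) : (B * A i * Bᵀ) x y =
      ∑ p : Fin 2 → ι, A i (p 0) (p 1) * (B x (p 0) * B y (p 1)) := by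
    rw [← (finTwoArrowEquiv ι).symm.sum_comp, Fintype.sum_prod_type_right]
    simp only [mul_apply, transpose_apply, sum_mul]
    simp [mul_comm, mul_left_comm]
  have hterm (σ : Perm ι) : ∏ i, (B * A i * Bᵀ) (σ (e (i, 0))) (σ (e (i, 1))) =
      ∑ h : ι → ι, (∏ i, A i (h (e (i, 0))) (h (e (i, 1)))) * ∏ x, B (σ x) (h x) := by
    simp only [entry, Fintype.prod_sum]
    refine (Fintype.sum_equiv E _ _ fun h => ?_).symm
    rw [prod_mul_distrib, ← e.prod_comp fun x => B (σ x) (h x), Fintype.prod_prod_type]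
    simp [E, Fin.prod_univ_two]
  simp only [polarizedPfaffian, hterm, det_apply, submatrix_apply, id, mul_sum, smul_sum,
    mul_smul_comm]
  exact sum_comm

theorem polarizedPfaffian_congruence (e : κ × Fin 2 ≃ ι) (A : κ → Matrix ι ι R)
    (B : Matrix ι ι R) :
    polarizedPfaffian e (fun i => B * A i * Bᵀ) = B.det * polarizedPfaffian e A := by
  have det_cols (h : ι → ι) :
      (B.submatrix id h).det = B.det * ((1 : Matrix ι ι R).submatrix id h).det := by
    rw [← det_mul]
    exact congrArg det (mul_submatrix_one (.refl ι) h B).symm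
  have hone := polarizedPfaffian_congruence_eq_sum e A 1
  simp only [Matrix.one_mul, transpose_one, Matrix.mul_one] at hone
  rw [hone, polarizedPfaffian_congruence_eq_sum, mul_sum]
  exact sum_congr rfl fun h _ => by rw [det_cols, mul_left_comm]

end Polarized

section BlockDiagonal

variable {κ μ ν α β R : Type*} [Fintype κ] [Fintype μ] [Fintype ν] [DecidableEq ν]
  [CommRing R]

/-- The pairing of a disjoint union that restricts to `e` on the left and to `f` on the right. -/
def sumPairing (e : κ × Fin 2 ≃ α) (f : μ × Fin 2 ≃ β) : (κ ⊕ μ) × Fin 2 ≃ α ⊕ β :=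
  (sumProdDistrib κ μ (Fin 2)).trans (e.sumCongr f)

/-- The terms of the multilinear expansion of the family constantly equal to the direct sum of `P`
and `Q`: the matrix at `i` is `P ⊕ 0` for `i ∈ S` and `0 ⊕ Q` otherwise. -/
def blockFamily (P : Matrix α α R) (Q : Matrix β β R) (S : Finset ν) :
    ν → Matrix (α ⊕ β) (α ⊕ β) R :=
  S.piecewise (fun _ => fromBlocks P 0 0 0) (fun _ => fromBlocks 0 0 0 Q)

theorem isLeft_iff_mem_of_prod_blockFamily_ne_zero {g : ν × Fin 2 ≃ α ⊕ β} {P : Matrix α α R}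
    {Q : Matrix β β R} {S : Finset ν} {σ : Perm (α ⊕ β)}
    (h : ∏ i, blockFamily P Q S i (σ (g (i, 0))) (σ (g (i, 1))) ≠ 0) (x : ν × Fin 2) :
    (σ (g x)).isLeft ↔ x.1 ∈ S := by
  obtain ⟨i, b⟩ := x
  have hi : blockFamily P Q S i (σ (g (i, 0))) (σ (g (i, 1))) ≠ 0 :=
    fun hi => h (prod_eq_zero (mem_univ i) hi)
  by_cases hS : i ∈ S <;> fin_cases b <;>
    rcases h₀ : σ (g (i, 0)) with a | a <;> rcases h₁ : σ (g (i, 1)) with c | c <;>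
    simp_all [blockFamily]

variable [Fintype α] [DecidableEq α] [Fintype β] [DecidableEq β]

theorem polarizedPfaffian_blockFamily_eq_zero (g : ν × Fin 2 ≃ α ⊕ β) (P : Matrix α α R)
    (Q : Matrix β β R) {S : Finset ν} (hS : 2 * #S ≠ Fintype.card α) :
    polarizedPfaffian g (blockFamily P Q S) = 0 := by
  refine sum_eq_zero fun σ _ => ?_
  by_contra h
  have hmem := isLeft_iff_mem_of_prod_blockFamily_ne_zero (right_ne_zero_of_smul h)
  have himage : (S ×ˢ univ).map (g.trans σ).toEmbedding = univ.map Function.Embedding.inl := by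
    ext y
    obtain ⟨x, rfl⟩ := (g.trans σ).surjective y
    simp [← hmem, Sum.isLeft_iff, @eq_comm _ (Sum.inl _)]
  have hcard := congrArg card himage
  simp only [card_map, card_product, card_univ, Fintype.card_fin] at hcard
  omega

theorem polarizedPfaffian_blockFamily_eq_of_card_eq (g : ν × Fin 2 ≃ α ⊕ β) (P : Matrix α α R)
    (Q : Matrix β β R) {S T : Finset ν} (hST : #S = #T) :
    polarizedPfaffian g (blockFamily P Q S) = polarizedPfaffian g (blockFamily P Q T) := by
  let e₀ : {i // i ∈ T} ≃ {i // i ∈ S} := Fintype.equivOfCardEq (by simp [hST])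
  let τ : Perm ν := e₀.extendSubtype
  have hτ (i : ν) : τ i ∈ S ↔ i ∈ T :=
    ⟨fun h => by_contra fun hi => e₀.extendSubtype_not_mem i hi h, e₀.extendSubtype_mem i⟩
  rw [← polarizedPfaffian_comp_perm g (blockFamily P Q S) τ]
  congr 1
  ext i : 1
  simp only [blockFamily, piecewise, hτ]

theorem polarizedPfaffian_blockFamily_inl [DecidableEq κ] [DecidableEq μ]
    (e : κ × Fin 2 ≃ α) (f : μ × Fin 2 ≃ β) (P : Matrix α α R) (Q : Matrix β β R) :
    polarizedPfaffian (sumPairing e f)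
        (blockFamily P Q (univ.map Function.Embedding.inl : Finset (κ ⊕ μ))) =
      polarizedPfaffian e (fun _ => P) * polarizedPfaffian f fun _ => Q := by
  simp only [polarizedPfaffian, sum_mul_sum, ← sum_product', univ_product_univ]
  symm
  refine sum_of_injOn (Perm.sumCongrHom α β) Perm.sumCongrHom_injective.injOn
    (fun _ _ => mem_coe.2 (mem_univ _)) (fun σ _ hσ => ?_) fun p _ => ?_
  · by_contra h
    have hmem := isLeft_iff_mem_of_prod_blockFamily_ne_zero (right_ne_zero_of_smul h)
    refine hσ ?_
    rw [coe_univ, Set.image_univ]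
    refine Perm.mem_sumCongrHom_range_of_perm_mapsTo_inl ?_
    rintro _ ⟨a, rfl⟩
    obtain ⟨x, rfl⟩ := e.surjective a
    have := (hmem (.inl x.1, x.2)).2 (by simp)
    simpa [Sum.isLeft_iff, sumPairing, @eq_comm _ (Sum.inl _)] using this
  · simp [Fintype.prod_sum_type, sumPairing, blockFamily, piecewise, smul_mul_smul_comm]

theorem polarizedPfaffian_fromBlocks_zero (e : κ × Fin 2 ≃ α) (f : μ × Fin 2 ≃ β)
    (P : Matrix α α R) (Q : Matrix β β R) :
    polarizedPfaffian (sumPairing e f) (fun _ => fromBlocks P 0 0 Q) =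
      (Fintype.card κ + Fintype.card μ).choose (Fintype.card κ) *
        (polarizedPfaffian e (fun _ => P) * polarizedPfaffian f fun _ => Q) := by
  classical
  have hα : Fintype.card α = 2 * Fintype.card κ := by
    simp [← Fintype.card_congr e, mul_comm]
  have hsplit : fromBlocks P 0 0 Q = fromBlocks P 0 0 0 + fromBlocks 0 0 0 Q := by
    simp [fromBlocks_add]
  rw [hsplit, polarizedPfaffian_add]
  change ∑ S, polarizedPfaffian (sumPairing e f) (blockFamily P Q S) = _
  rw [← sum_subset (subset_univ (powersetCard (Fintype.card κ) univ)) fun S _ hS =>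
      polarizedPfaffian_blockFamily_eq_zero _ P Q (by simpa [hα, eq_comm] using hS),
    sum_congr rfl fun S hS => (polarizedPfaffian_blockFamily_eq_of_card_eq _ P Q
      (by simpa using hS)).trans (polarizedPfaffian_blockFamily_inl e f P Q)]
  simp

end BlockDiagonal

section InlInrPairing

variable {κ : Type*}

variable (κ) in
/-- The pairing of `κ ⊕ κ` matching each element of the left copy with itself in the right copy. -/
def inlInrPairing : κ × Fin 2 ≃ κ ⊕ κ :=
  (prodComm _ _).trans ((finTwoEquiv.prodCongr (.refl κ)).trans (boolProdEquivSum κ))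

@[simp]
theorem inlInrPairing_zero (i : κ) : inlInrPairing κ (i, 0) = .inl i := rfl

@[simp]
theorem inlInrPairing_one (i : κ) : inlInrPairing κ (i, 1) = .inr i := rfl

end InlInrPairing

section Clearing

variable {α β R : Type*} [Fintype α] [DecidableEq α] [CommRing R] [Algebra ℚ R]

theorem sub_mul_transpose_add_mul_transpose_eq_fromBlocks {A : Matrix (α ⊕ β) (α ⊕ β) R}
    (hA : Aᵀ = -A) :
    let E : Matrix (α ⊕ β) α R := fromRows 1 0
    let W : Matrix (α ⊕ β) α R := fromRows ((1 / 2 : ℚ) • A.toBlocks₁₁) A.toBlocks₂₁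
    A - W * Eᵀ + E * Wᵀ = fromBlocks 0 0 0 A.toBlocks₂₂ := by
  intro E W
  have h₁₁ : A.toBlocks₁₁ᵀ = -A.toBlocks₁₁ := congrArg toBlocks₁₁ hA
  have h₂₁ : A.toBlocks₂₁ᵀ = -A.toBlocks₁₂ := congrArg toBlocks₁₂ hA
  have hWE : W * Eᵀ = fromBlocks ((1 / 2 : ℚ) • A.toBlocks₁₁) 0 A.toBlocks₂₁ 0 := by
    simp only [W, E, transpose_fromRows, fromRows_mul_fromCols]
    simp
  have hEW : E * Wᵀ = fromBlocks (-(1 / 2 : ℚ) • A.toBlocks₁₁) (-A.toBlocks₁₂) 0 0 := by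
    simp only [W, E, transpose_fromRows, fromRows_mul_fromCols]
    simp [h₁₁, h₂₁]
  rw [hWE, hEW]
  nth_rw 1 [← fromBlocks_toBlocks A]
  simp only [sub_eq_add_neg, fromBlocks_neg, fromBlocks_add]
  congr 1 <;> module

end Clearing

section Paired

variable {κ μ ι ι' α β R : Type*} [Fintype κ] [Fintype μ] [Fintype ι] [DecidableEq ι]
  [Fintype ι'] [DecidableEq ι'] [Fintype α] [DecidableEq α] [Fintype β] [DecidableEq β]
  [CommRing R] [Algebra ℚ R]

/-- The Pfaffian of a matrix whose index type is split into ordered pairs by `e`, given by the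
permutation sum; dividing by `2 ^ n * n!` is what requires a `ℚ`-algebra. Changing `e` multiplies it
by the sign of the change. -/
def pairedPfaffian (e : κ × Fin 2 ≃ ι) (A : Matrix ι ι R) : R :=
  (2 ^ Fintype.card κ * (Fintype.card κ)! : ℚ)⁻¹ • polarizedPfaffian e fun _ => A

theorem pairedPfaffian_trans (e : κ × Fin 2 ≃ ι) (r : ι ≃ ι') (A : Matrix ι' ι' R) :
    pairedPfaffian (e.trans r) A = pairedPfaffian e (A.submatrix r r) := by
  rw [pairedPfaffian, polarizedPfaffian_trans, pairedPfaffian]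

theorem pairedPfaffian_trans_perm (e : κ × Fin 2 ≃ ι) (π : Perm ι) (A : Matrix ι ι R) :
    pairedPfaffian (e.trans π) A = Perm.sign π • pairedPfaffian e A := by
  rw [pairedPfaffian, polarizedPfaffian_trans_perm, smul_comm, pairedPfaffian]

theorem pairedPfaffian_prodCongr_trans (τ : κ ≃ μ) (e : μ × Fin 2 ≃ ι) (A : Matrix ι ι R) :
    pairedPfaffian ((τ.prodCongr (.refl _)).trans e) A = pairedPfaffian e A := by
  rw [pairedPfaffian, pairedPfaffian, polarizedPfaffian_prodCongr_trans τ e fun _ => A,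
    Fintype.card_congr τ]

theorem pairedPfaffian_neg (e : κ × Fin 2 ≃ ι) (A : Matrix ι ι R) :
    pairedPfaffian e (-A) = (-1) ^ Fintype.card κ * pairedPfaffian e A := by
  simp only [pairedPfaffian, polarizedPfaffian, Matrix.neg_apply, prod_neg, mul_smul_comm, mul_sum,
    card_univ]

theorem pairedPfaffian_congruence (e : κ × Fin 2 ≃ ι) (A B : Matrix ι ι R) :
    pairedPfaffian e (B * A * Bᵀ) = B.det * pairedPfaffian e A := by
  rw [pairedPfaffian, polarizedPfaffian_congruence, ← mul_smul_comm, pairedPfaffian]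

theorem pairedPfaffian_fromBlocks_zero (e : κ × Fin 2 ≃ α) (f : μ × Fin 2 ≃ β)
    (P : Matrix α α R) (Q : Matrix β β R) :
    pairedPfaffian (sumPairing e f) (fromBlocks P 0 0 Q) =
      pairedPfaffian e P * pairedPfaffian f Q := by
  set a := Fintype.card κ
  set b := Fintype.card μ
  have hchoose : ((a + b).choose a : ℚ) * a ! * b ! = (a + b)! := by
    rw [Nat.choose_symm_add]
    exact_mod_cast a.add_choose_mul_factorial_mul_factorial b
  have hscalar : (2 ^ (a + b) * (a + b)! : ℚ)⁻¹ * (a + b).choose a =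
      (2 ^ a * a ! : ℚ)⁻¹ * (2 ^ b * b ! : ℚ)⁻¹ := by
    have := Nat.choose_pos (Nat.le_add_right a b)
    rw [← hchoose]
    field_simp
    ring
  simp only [pairedPfaffian, polarizedPfaffian_fromBlocks_zero, Fintype.card_sum]
  rw [smul_mul_smul_comm, ← hscalar, mul_smul, Nat.cast_smul_eq_nsmul, nsmul_eq_mul]

/- `W` is a free parameter because `E` at the off-diagonal corner can absorb any change of `A` by
`-W * Eᵀ + E * Wᵀ`. -/
theorem pairedPfaffian_mul_pairedPfaffian_compression_inv {A : Matrix ι ι R} (e : κ × Fin 2 ≃ ι)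
    (f : μ × Fin 2 ≃ α) (hA : Aᵀ = -A) (hu : IsUnit A.det) (E W : Matrix ι α R) :
    pairedPfaffian e A * pairedPfaffian f (Eᵀ * A⁻¹ * E) =
      pairedPfaffian (sumPairing f e) (fromBlocks 0 (-Eᵀ) E (A - W * Eᵀ + E * Wᵀ)) := by
  have hAinv : A⁻¹ᵀ = -A⁻¹ := by
    rw [transpose_nonsing_inv, hA]
    exact inv_eq_left_inv (by rw [neg_mul_neg, nonsing_inv_mul A hu])
  have hschur : fromBlocks 1 (-(Eᵀ * A⁻¹)) 0 1 * fromBlocks (Eᵀ * A⁻¹ * E) 0 0 A *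
      (fromBlocks 1 (-(Eᵀ * A⁻¹)) 0 1)ᵀ = fromBlocks 0 (-Eᵀ) E A := by
    simp [fromBlocks_transpose, fromBlocks_multiply, hAinv, Matrix.mul_assoc,
      mul_nonsing_inv_cancel_left A _ hu, nonsing_inv_mul A hu]
  have hclear : fromBlocks 1 0 W 1 * fromBlocks 0 (-Eᵀ) E A * (fromBlocks 1 0 W 1)ᵀ =
      fromBlocks 0 (-Eᵀ) E (A - W * Eᵀ + E * Wᵀ) := by
    simp [fromBlocks_transpose, fromBlocks_multiply, sub_eq_neg_add, add_comm]
  rw [← hclear, pairedPfaffian_congruence, ← hschur, pairedPfaffian_congruence,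
    pairedPfaffian_fromBlocks_zero, mul_comm]
  simp

theorem pairedPfaffian_J_congr [DecidableEq κ] [DecidableEq μ] (τ : κ ≃ μ) :
    pairedPfaffian (inlInrPairing κ) (J κ R) = pairedPfaffian (inlInrPairing μ) (J μ R) := by
  have hpairing : (inlInrPairing κ).trans (τ.sumCongr τ) =
      (τ.prodCongr (.refl _)).trans (inlInrPairing μ) := by
    ext ⟨i, b⟩
    fin_cases b <;> simp
  rw [← pairedPfaffian_prodCongr_trans τ, ← hpairing, pairedPfaffian_trans]
  congr 1
  ext (i | i) (j | j) <;> simp [J, one_apply]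

theorem pairedPfaffian_J_sum [DecidableEq κ] [DecidableEq μ] :
    pairedPfaffian (inlInrPairing (κ ⊕ μ)) (J (κ ⊕ μ) R) =
      pairedPfaffian (inlInrPairing κ) (J κ R) * pairedPfaffian (inlInrPairing μ) (J μ R) := by
  have hpairing : inlInrPairing (κ ⊕ μ) =
      (sumPairing (inlInrPairing κ) (inlInrPairing μ)).trans (sumSumSumComm κ κ μ μ) := by
    ext ⟨i | i, b⟩ <;> fin_cases b <;> simp [sumPairing]
  rw [hpairing, pairedPfaffian_trans, ← pairedPfaffian_fromBlocks_zero]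
  congr 1
  ext ((i | i) | (i | i)) ((j | j) | (j | j)) <;> simp [J, one_apply]

theorem pairedPfaffian_J_fin_one :
    pairedPfaffian (inlInrPairing (Fin 1)) (J (Fin 1) R) = -1 := by
  have hperm : (univ : Finset (Perm (Fin 1 ⊕ Fin 1))) = {1, swap (.inl 0) (.inr 0)} := by decide
  have hswap : (1 : Perm (Fin 1 ⊕ Fin 1)) ≠ swap (.inl 0) (.inr 0) := by decide
  have htwo : (2 : ℚ)⁻¹ • (-1 + -1 : R) = -1 := by module
  simpa [pairedPfaffian, polarizedPfaffian, hperm, sum_pair hswap, J] using htwo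

theorem pairedPfaffian_J_fin (n : ℕ) :
    pairedPfaffian (inlInrPairing (Fin n)) (J (Fin n) R) = (-1) ^ n := by
  induction n with
  | zero => simp [pairedPfaffian, polarizedPfaffian]
  | succ n ih =>
    rw [← pairedPfaffian_J_congr finSumFinEquiv, pairedPfaffian_J_sum, ih,
      pairedPfaffian_J_fin_one, pow_succ]

theorem pairedPfaffian_inlInrPairing_J [DecidableEq κ] :
    pairedPfaffian (inlInrPairing κ) (J κ R) = (-1) ^ Fintype.card κ := by
  rw [pairedPfaffian_J_congr (Fintype.equivFin κ), pairedPfaffian_J_fin]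

/- For `inlInrPairing` this is the compression identity with `A = J` and `E = 1`, where
`W = J / 2` clears the lower right block. -/
theorem pairedPfaffian_sumPairing_J (e : κ × Fin 2 ≃ α) :
    pairedPfaffian (sumPairing e e) (J α R) = (-1) ^ Fintype.card κ := by
  classical
  let r : κ ⊕ κ ≃ α := (inlInrPairing κ).symm.trans e
  have hpairing : sumPairing e e =
      (sumPairing (inlInrPairing κ) (inlInrPairing κ)).trans (r.sumCongr r) := by
    ext ⟨i | i, b⟩ <;> simp [sumPairing, r]
  have hJ : (J α R).submatrix (r.sumCongr r) (r.sumCongr r) = J (κ ⊕ κ) R := by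
    ext (i | i) (j | j) <;> simp [J, one_apply]
  have hclear : J κ R - (1 / 2 : ℚ) • J κ R + ((1 / 2 : ℚ) • J κ R)ᵀ = 0 := by
    rw [transpose_smul, J_transpose]
    module
  have h := pairedPfaffian_mul_pairedPfaffian_compression_inv (inlInrPairing κ) (inlInrPairing κ)
    (J_transpose κ R) (isUnit_det_J κ R) 1 ((1 / 2 : ℚ) • J κ R)
  rw [transpose_one, Matrix.one_mul, Matrix.mul_one, Matrix.one_mul, Matrix.mul_one, hclear,
    J_inv, pairedPfaffian_neg, pairedPfaffian_inlInrPairing_J, ← J] at h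
  rw [hpairing, pairedPfaffian_trans, hJ, ← h, ← mul_pow]
  simp

theorem pairedPfaffian_mul_pairedPfaffian_inv_toBlocks₁₁ (e : κ × Fin 2 ≃ α) (f : μ × Fin 2 ≃ β)
    {A : Matrix (α ⊕ β) (α ⊕ β) R} (hA : Aᵀ = -A) (hu : IsUnit A.det) :
    pairedPfaffian (sumPairing e f) A * pairedPfaffian e A⁻¹.toBlocks₁₁ =
      (-1) ^ Fintype.card κ * pairedPfaffian f A.toBlocks₂₂ := by
  let E : Matrix (α ⊕ β) α R := fromRows 1 0
  let W : Matrix (α ⊕ β) α R := fromRows ((1 / 2 : ℚ) • A.toBlocks₁₁) A.toBlocks₂₁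
  have hcompress : Eᵀ * A⁻¹ * E = A⁻¹.toBlocks₁₁ := by
    rw [← fromBlocks_toBlocks A⁻¹, toBlocks_fromBlocks₁₁]
    simp [E, transpose_fromRows, fromCols_mul_fromBlocks, fromCols_mul_fromRows]
  have hclear : A - W * Eᵀ + E * Wᵀ = fromBlocks 0 0 0 A.toBlocks₂₂ :=
    sub_mul_transpose_add_mul_transpose_eq_fromBlocks hA
  have hreassoc : (fromBlocks 0 (-Eᵀ) E (fromBlocks 0 0 0 A.toBlocks₂₂)).submatrix
      (sumAssoc α α β) (sumAssoc α α β) = fromBlocks (J α R) 0 0 A.toBlocks₂₂ := by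
    ext ((x | x) | x) ((y | y) | y) <;> simp [E, J, one_apply, eq_comm]
  have hpairing : sumPairing e (sumPairing e f) =
      ((sumAssoc κ κ μ).symm.prodCongr (.refl _)).trans
        ((sumPairing (sumPairing e e) f).trans (sumAssoc α α β)) := by
    ext ⟨i | i | i, b⟩ <;> simp [sumPairing]
  rw [← hcompress, pairedPfaffian_mul_pairedPfaffian_compression_inv _ _ hA hu E W, hclear,
    hpairing, pairedPfaffian_prodCongr_trans, pairedPfaffian_trans, hreassoc,
    pairedPfaffian_fromBlocks_zero, pairedPfaffian_sumPairing_J]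

end Paired

section OrderedSubset

variable {α : Type*} [LinearOrder α] {c : ℕ} {L : Finset α}

theorem card_filter_lt_orderEmbOfFin (hL : #L = c) (i : Fin c) :
    #{x ∈ L | x < L.orderEmbOfFin hL i} = i := by
  rw [← Fin.card_Iio i, ← card_map (L.orderEmbOfFin hL).toEmbedding]
  congr 1
  ext x
  by_cases hx : x ∈ L
  · obtain ⟨y, rfl⟩ : x ∈ Set.range (L.orderEmbOfFin hL) := by simpa using hx
    simp
  · have hne (y : Fin c) : L.orderEmbOfFin hL y ≠ x :=
      fun h => hx (h ▸ L.orderEmbOfFin_mem hL y)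
    simp [hx, hne]

theorem sum_card_filter_lt (hL : #L = c) : ∑ j ∈ L, #{x ∈ L | x < j} = ∑ i ∈ range c, i := by
  rw [sum_range, ← sum_coe_sort,
    ← (L.orderIsoOfFin hL).toEquiv.sum_comp fun j => #{x ∈ L | x < (j : α)}]
  exact sum_congr rfl fun i _ => card_filter_lt_orderEmbOfFin hL i

end OrderedSubset

section Shuffle

variable {n c d : ℕ} {L : Finset (Fin n)}

theorem add_eq_of_card_eq_of_card_compl_eq (hL : #L = c) (hLc : #Lᶜ = d) : c + d = n := by
  rw [← hL, ← hLc, card_add_card_compl, Fintype.card_fin]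

/-- The permutation of `Fin n` whose list of values is `L` in increasing order followed by its
complement in increasing order. -/
def shufflePerm (hL : #L = c) (hLc : #Lᶜ = d) : Perm (Fin n) :=
  (finSumFinEquiv.trans (finCongr (add_eq_of_card_eq_of_card_compl_eq hL hLc))).symm.trans
    (finSumEquivOfFinset hL hLc)

theorem shufflePerm_symm_lt_iff (hL : #L = c) (hLc : #Lᶜ = d) {i j : Fin n}
    (hij : i < j) :
    (shufflePerm hL hLc).symm i < (shufflePerm hL hLc).symm j ↔ (j ∈ L → i ∈ L) := by
  have hsymm (x : Fin c ⊕ Fin d) :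
      (shufflePerm hL hLc).symm (finSumEquivOfFinset hL hLc x) =
        finCongr (add_eq_of_card_eq_of_card_compl_eq hL hLc) (finSumFinEquiv x) := by
    simp [shufflePerm]
  have hinr (x : Fin d) : Lᶜ.orderEmbOfFin hLc x ∉ L := mem_compl.1 (Lᶜ.orderEmbOfFin_mem hLc x)
  obtain ⟨x, rfl⟩ := (finSumEquivOfFinset hL hLc).surjective i
  obtain ⟨y, rfl⟩ := (finSumEquivOfFinset hL hLc).surjective j
  rw [hsymm, hsymm]
  rcases x with x | x <;> rcases y with y | y <;>
    simp only [finSumEquivOfFinset_inl, finSumEquivOfFinset_inr, OrderEmbedding.lt_iff_lt,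
      Fin.lt_def, orderEmbOfFin_mem, hinr, finSumFinEquiv_apply_left, finSumFinEquiv_apply_right,
      finCongr_apply, Fin.val_cast, Fin.val_castAdd, Fin.val_natAdd] at hij ⊢ <;>
    grind

theorem prod_Iio_ite_mem_imp (L : Finset (Fin n)) (j : Fin n) :
    ∏ i ∈ Iio j, (if j ∈ L → i ∈ L then 1 else -1 : ℤˣ) =
      if j ∈ L then (-1) ^ ((j : ℕ) + #{x ∈ L | x < j}) else 1 := by
  by_cases hj : j ∈ L
  · have hbelow : {x ∈ Iio j | x ∈ L} = ({x ∈ L | x < j} : Finset _) := by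
      ext x
      simp [and_comm]
    have hcard := card_filter_add_card_filter_not (s := Iio j) (· ∈ L)
    rw [hbelow, Fin.card_Iio] at hcard
    rw [← hcard]
    simp [hj, prod_ite, pow_add, mul_right_comm, ← mul_pow]
  · simp [hj]

theorem sign_shufflePerm (hL : #L = c) (hLc : #Lᶜ = d) :
    Perm.sign (shufflePerm hL hLc) = (-1) ^ (∑ ℓ ∈ L, (ℓ : ℕ) + ∑ i ∈ range c, i) := by
  rw [← Perm.sign_symm, Perm.sign_eq_prod_prod_Iio]
  calc ∏ j, ∏ i ∈ Iio j, (if (shufflePerm hL hLc).symm i < (shufflePerm hL hLc).symm j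
        then 1 else -1 : ℤˣ)
    _ = ∏ j, if j ∈ L then (-1) ^ ((j : ℕ) + #{x ∈ L | x < j}) else 1 :=
      prod_congr rfl fun j _ => by
        rw [← prod_Iio_ite_mem_imp]
        exact prod_congr rfl fun i hi =>
          if_congr (shufflePerm_symm_lt_iff hL hLc (mem_Iio.1 hi)) rfl rfl
    _ = (-1) ^ (∑ ℓ ∈ L, (ℓ : ℕ) + ∑ i ∈ range c, i) := by
      rw [prod_ite_mem, univ_inter, prod_pow_eq_pow_sum, sum_add_distrib, sum_card_filter_lt hL]

theorem neg_one_pow_sum_range_two_mul {M : Type*} [Monoid M] [HasDistribNeg M] (k : ℕ) :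
    (-1 : M) ^ (∑ i ∈ range (2 * k), i) = (-1) ^ k := by
  induction k with
  | zero => simp
  | succ k ih =>
    rw [mul_add_one, sum_range_succ, sum_range_succ, pow_add, pow_add, ih]
    simp [pow_succ, pow_mul]

theorem sign_shufflePerm_two_mul {k : ℕ} (hL : #L = 2 * k) (hLc : #Lᶜ = d) :
    Perm.sign (shufflePerm hL hLc) = (-1) ^ (∑ ℓ ∈ L, (ℓ.val + 1) + k) := by
  rw [sign_shufflePerm, pow_add, neg_one_pow_sum_range_two_mul, sum_add_distrib, sum_const, hL,
    pow_add, pow_add]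
  simp

end Shuffle

section FinPairing

variable {m n k l : ℕ}

/-- The pairing `(i, b) ↦ 2 * i + b` underlying the usual Pfaffian of a `2n × 2n` matrix. -/
def finPairing (n : ℕ) : Fin n × Fin 2 ≃ Fin (2 * n) :=
  finProdFinEquiv.trans (finCongr (mul_comm n 2))

theorem finPairing_val (x : Fin n × Fin 2) : (finPairing n x : ℕ) = 2 * x.1 + x.2 := by
  simp [finPairing, add_comm]

theorem pfaffian_eq_pairedPfaffian (A : Matrix (Fin (2 * n)) (Fin (2 * n)) ℝ) :
    pfaffian A = pairedPfaffian (finPairing n) A := by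
  have hzero (i : Fin n) : finPairing n (i, 0) = ⟨2 * i, by omega⟩ :=
    Fin.ext (finPairing_val _)
  have hone (i : Fin n) : finPairing n (i, 1) = ⟨2 * i + 1, by omega⟩ :=
    Fin.ext (finPairing_val _)
  simp [pfaffian, pairedPfaffian, polarizedPfaffian, hzero, hone, Rat.smul_def, Units.smul_def]

theorem sumPairing_finPairing_trans_finSumEquivOfFinset {L : Finset (Fin (2 * m))}
    (hL : #L = 2 * k) (hLc : #Lᶜ = 2 * l) (hkl : k + l = m) :
    (sumPairing (finPairing k) (finPairing l)).trans (finSumEquivOfFinset hL hLc) =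
      (((finSumFinEquiv.trans (finCongr hkl)).prodCongr (.refl _)).trans (finPairing m)).trans
        (shufflePerm hL hLc) := by
  suffices hpairing : sumPairing (finPairing k) (finPairing l) =
      (((finSumFinEquiv.trans (finCongr hkl)).prodCongr (.refl _)).trans (finPairing m)).trans
        (finSumFinEquiv.trans (finCongr
          (add_eq_of_card_eq_of_card_compl_eq hL hLc))).symm by
    rw [hpairing, shufflePerm, trans_assoc]
  ext x : 1
  rw [trans_apply, eq_symm_apply]
  ext
  obtain ⟨i | i, b⟩ := x <;> simp [sumPairing, finPairing_val, mul_add, add_assoc]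

theorem pairedPfaffian_finPairing_eq {R : Type*} [CommRing R] [Algebra ℚ R]
    {L : Finset (Fin (2 * m))} (hL : #L = 2 * k) (hLc : #Lᶜ = 2 * l)
    (A : Matrix (Fin (2 * m)) (Fin (2 * m)) R) :
    pairedPfaffian (finPairing m) A = (-1) ^ (∑ ℓ ∈ L, (ℓ.val + 1) + k) *
      pairedPfaffian (sumPairing (finPairing k) (finPairing l))
        (A.submatrix (finSumEquivOfFinset hL hLc) (finSumEquivOfFinset hL hLc)) := by
  have hkl : k + l = m := by
    have := add_eq_of_card_eq_of_card_compl_eq hL hLc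
    omega
  rw [← pairedPfaffian_trans, sumPairing_finPairing_trans_finSumEquivOfFinset hL hLc hkl,
    pairedPfaffian_trans_perm, pairedPfaffian_prodCongr_trans, sign_shufflePerm_two_mul]
  simp [Units.smul_def, ← mul_assoc, ← mul_pow]

end FinPairing

theorem stmt_11_general {R : Type*} [CommRing R] [Algebra ℚ R] {m k l : ℕ}
    (A : Matrix (Fin (2 * m)) (Fin (2 * m)) R) (hA : Aᵀ = -A) (hInv : IsUnit A.det)
    (L : Finset (Fin (2 * m))) (hL : #L = 2 * k) (hLc : #Lᶜ = 2 * l) :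
    (-1) ^ (∑ ℓ ∈ L, (ℓ.val + 1)) *
        pairedPfaffian (finPairing l)
          (A.submatrix (Lᶜ.orderEmbOfFin hLc) (Lᶜ.orderEmbOfFin hLc)) =
      pairedPfaffian (finPairing m) A *
        pairedPfaffian (finPairing k)
          (A⁻¹.submatrix (L.orderEmbOfFin hL) (L.orderEmbOfFin hL)) := by
  let r := finSumEquivOfFinset hL hLc
  have hblocks := pairedPfaffian_mul_pairedPfaffian_inv_toBlocks₁₁ (finPairing k) (finPairing l)
    (A := A.submatrix r r) (by rw [transpose_submatrix, hA]; rfl)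
    (by rwa [det_submatrix_equiv_self])
  have hinl : (A.submatrix r r)⁻¹.toBlocks₁₁ =
      A⁻¹.submatrix (L.orderEmbOfFin hL) (L.orderEmbOfFin hL) := by
    rw [inv_submatrix_equiv]
    ext i j
    simp [r, toBlocks₁₁]
  have hinr : (A.submatrix r r).toBlocks₂₂ =
      A.submatrix (Lᶜ.orderEmbOfFin hLc) (Lᶜ.orderEmbOfFin hLc) := by
    ext i j
    simp [r, toBlocks₂₂]
  rw [hinl, hinr, Fintype.card_fin] at hblocks
  rw [pairedPfaffian_finPairing_eq hL hLc, mul_assoc, hblocks, pow_add, mul_assoc,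
    ← mul_assoc (_ ^ k), ← mul_pow]
  simp

theorem stmt_11 {m k : ℕ} (A : Matrix (Fin (2 * m)) (Fin (2 * m)) ℝ)
    (hA : A.transpose = -A) (hInv : IsUnit A.det)
    (L : Finset (Fin (2 * m))) (hL : L.card = 2 * k)
    (hLc : Lᶜ.card = 2 * (m - k)) :
    (-1 : ℝ) ^ (∑ ℓ ∈ L, (ℓ.val + 1)) *
      pfaffian (n := m - k)
        (fun i j => A ((Lᶜ.orderIsoOfFin hLc i).1) ((Lᶜ.orderIsoOfFin hLc j).1)) =
    pfaffian A *
      pfaffian (n := k)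
        (fun i j => A⁻¹ ((L.orderIsoOfFin hL i).1) ((L.orderIsoOfFin hL j).1)) := by
  have h := stmt_11_general A hA hInv L hL hLc
  simp only [← pfaffian_eq_pairedPfaffian] at h
  exact h
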